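/- Fix disjoint sets Y (agent atoms) and X (environment atoms), and let φ_org be an LTLf formula over atoms Y ∪ X. Let σ_org be an agent strategy winning for φ_org, let h = (Y_0,X_0)⋯(Y_n,X_n) be a σ_org-consistent history, and let σ_new be a strategy winning for φ_org assuming h. Define the strategy σ_org[h ← σ_new] : (2^X)^* → 2^Y by: on an environment sequence of the form env(h)·e, where env(h) = X_0⋯X_n is the sequence of environment moves of h, its value is σ_new(e); on every other environment sequence its value equals that of σ_org. Then σ_org[h ← σ_new] is winning for φ_org. -/

import Mathlib

inductive LTLf (P : Type) : Type where
  | tt : LTLf P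
  | ff : LTLf P
  | atom : P → LTLf P
  | natom : P → LTLf P
  | conj : LTLf P → LTLf P → LTLf P
  | disj : LTLf P → LTLf P → LTLf P
  | next : LTLf P → LTLf P
  | wnext : LTLf P → LTLf P
  | untl : LTLf P → LTLf P → LTLf P
  | release : LTLf P → LTLf P → LTLf P
  deriving DecidableEq

def LTLf.Sat {P : Type} : List (Set P) → LTLf P → Prop
  | _, .tt => True
  | _, .ff => False
  | [], .atom _ => False
  | w :: _, .atom p => p ∈ w
  | [], .natom _ => False
  | w :: _, .natom p => p ∉ w
  | τ, .conj φ₁ φ₂ => LTLf.Sat τ φ₁ ∧ LTLf.Sat τ φ₂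
  | τ, .disj φ₁ φ₂ => LTLf.Sat τ φ₁ ∨ LTLf.Sat τ φ₂
  | [], .next _ => False
  | _ :: τ, .next φ => τ ≠ [] ∧ LTLf.Sat τ φ
  | [], .wnext _ => True
  | _ :: τ, .wnext φ => τ = [] ∨ LTLf.Sat τ φ
  | [], .untl _ _ => False
  | w :: τ, .untl φ₁ φ₂ =>
      LTLf.Sat (w :: τ) φ₂ ∨ (LTLf.Sat (w :: τ) φ₁ ∧ LTLf.Sat τ (.untl φ₁ φ₂))
  | [], .release _ _ => True
  | w :: τ, .release φ₁ φ₂ =>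
      LTLf.Sat (w :: τ) φ₂ ∧ (LTLf.Sat (w :: τ) φ₁ ∨ LTLf.Sat τ (.release φ₁ φ₂))
termination_by τ φ => (τ.length, sizeOf φ)

open Classical in
noncomputable def LTLf.prog {P : Type} : LTLf P → Set P → LTLf P
  | .tt, _ => .tt
  | .ff, _ => .ff
  | .atom p, w => if p ∈ w then .tt else .ff
  | .natom p, w => if p ∈ w then .ff else .tt
  | .conj φ₁ φ₂, w => .conj (φ₁.prog w) (φ₂.prog w)
  | .disj φ₁ φ₂, w => .disj (φ₁.prog w) (φ₂.prog w)
  | .next φ, _ => .conj φ (.untl .tt .tt)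
  | .wnext φ, _ => .disj φ (.release .ff .ff)
  | .untl φ₁ φ₂, w =>
      .disj (φ₂.prog w) (.conj (φ₁.prog w) (.conj (.untl φ₁ φ₂) (.untl .tt .tt)))
  | .release φ₁ φ₂, w =>
      .conj (φ₂.prog w) (.disj (φ₁.prog w) (.disj (.release φ₁ φ₂) (.release .ff .ff)))

noncomputable def LTLf.progTrace {P : Type} (φ : LTLf P) (h : List (Set P)) : LTLf P :=
  h.foldl LTLf.prog φ

/-- The joint interpretation over atoms `Y ⊕ X` determined by an agent move `m.1 ⊆ Y`
and an environment move `m.2 ⊆ X`. -/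
def joint {Y X : Type} (m : Set Y × Set X) : Set (Y ⊕ X) :=
  {a | Sum.elim (· ∈ m.1) (· ∈ m.2) a}

/-- The finite trace (over `2^(Y∪X)`) formed by the first `k` joint moves of a play. -/
def jointTrace {Y X : Type} (π : ℕ → Set Y × Set X) (k : ℕ) : List (Set (Y ⊕ X)) :=
  (List.range k).map fun i => joint (π i)

/-- The finite trace corresponding to a history (finite sequence of joint moves). -/
def histTrace {Y X : Type} (h : List (Set Y × Set X)) : List (Set (Y ⊕ X)) :=
  h.map joint

/-- A play is σ-consistent if at every instant the agent move is the one prescribed by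
the strategy σ on the preceding environment moves (in particular `Y_0 = σ(ε)`). -/
def PlayConsistent {Y X : Type} (σ : List (Set X) → Set Y) (π : ℕ → Set Y × Set X) : Prop :=
  ∀ i : ℕ, (π i).1 = σ ((List.range i).map fun j => (π j).2)

/-- A history is σ-consistent if every agent move in it is prescribed by σ on the
preceding environment moves. -/
def HistConsistent {Y X : Type} (σ : List (Set X) → Set Y) (h : List (Set Y × Set X)) : Prop :=
  ∀ (i : ℕ) (hi : i < h.length), (h.get ⟨i, hi⟩).1 = σ ((h.take i).map Prod.snd)
/-- A strategy σ is winning for the LTLf formula φ over atoms Y ∪ X if every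
σ-consistent play has a finite, possibly empty, prefix satisfying φ. -/
def WinningFor {Y X : Type} (σ : List (Set X) → Set Y) (φ : LTLf (Y ⊕ X)) : Prop :=
  ∀ π : ℕ → Set Y × Set X, PlayConsistent σ π → ∃ k : ℕ, LTLf.Sat (jointTrace π k) φ

/-- A strategy σ is winning for φ assuming the history h if for every σ-consistent play τ
the concatenation h·τ has a finite, possibly empty, prefix (extending h) satisfying φ. -/
def WinningAssuming {Y X : Type} (σ : List (Set X) → Set Y) (φ : LTLf (Y ⊕ X))
    (h : List (Set Y × Set X)) : Prop :=
  ∀ π : ℕ → Set Y × Set X, PlayConsistent σ π →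
    ∃ k : ℕ, LTLf.Sat (histTrace h ++ jointTrace π k) φ

/-- A strategy σ solves incremental synthesis for (φ_org, h, φ_new) if every σ-consistent
play has a finite, possibly empty, prefix ρ such that h·ρ satisfies φ_org and ρ
satisfies φ_new. -/
def SolvesIncremental {Y X : Type} (σ : List (Set X) → Set Y) (φorg : LTLf (Y ⊕ X))
    (h : List (Set Y × Set X)) (φnew : LTLf (Y ⊕ X)) : Prop :=
  ∀ π : ℕ → Set Y × Set X, PlayConsistent σ π →
    ∃ k : ℕ, LTLf.Sat (histTrace h ++ jointTrace π k) φorg ∧ LTLf.Sat (jointTrace π k) φnew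

theorem map_range_add {α : Type} (f : ℕ → α) (m k : ℕ) :
    (List.range (m + k)).map f =
      (List.range m).map f ++ (List.range k).map fun i => f (m + i) := by
  rw [List.range_add, List.map_append, List.map_map]
  rfl

theorem jointTrace_add {Y X : Type} (π : ℕ → Set Y × Set X) (m k : ℕ) :
    jointTrace π (m + k) = jointTrace π m ++ jointTrace (fun i => π (m + i)) k :=
  map_range_add _ m k

/-- A list that is a prefix of some initial segment of a sequence is itself an initial segment
of that sequence. -/
theorem eq_map_range_of_prefix {α : Type} {f : ℕ → α} {l : List α} {i : ℕ}
    (hl : l <+: (List.range i).map f) : l = (List.range l.length).map f := by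
  have hle : l.length ≤ i := by simpa using hl.length_le
  rw [← Nat.min_eq_left hle, ← List.take_range, List.map_take]
  exact List.prefix_iff_eq_take.mp hl

/-- If a play follows a `σ`-consistent history `h` in its environment moves, and follows `σ`
as long as the history lasts, then `h` is an initial segment of the play. -/
theorem HistConsistent.eq_map_range {Y X : Type} {σ : List (Set X) → Set Y}
    {h : List (Set Y × Set X)} (hh : HistConsistent σ h) {π : ℕ → Set Y × Set X}
    (henv : h.map Prod.snd = (List.range h.length).map fun j => (π j).2)
    (hσ : ∀ i < h.length, (π i).1 = σ ((List.range i).map fun j => (π j).2)) :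
    h = (List.range h.length).map π := by
  refine List.ext_getElem (by simp) fun i hi _ => ?_
  have hsnd : h[i].2 = (π i).2 := by
    have := congrArg (fun l => l[i]?) henv
    simpa [hi] using this
  have hfst : h[i].1 = (π i).1 := by
    rw [hσ i hi]
    refine (hh i hi).trans ?_
    rw [List.map_take, henv, ← List.map_take, List.take_range, Nat.min_eq_left hi.le]
  simpa using Prod.ext hfst hsnd

/-- If σ_org is winning for φ_org, h is a σ_org-consistent history, and
σ_new is winning for φ_org assuming h, then the strategy σ_org[h ← σ_new] — which on
environment sequences of the form env(h)·e returns σ_new(e) and on every other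
environment sequence agrees with σ_org — is winning for φ_org. -/
theorem combined_strategy_winning {Y X : Type} (φorg : LTLf (Y ⊕ X))
    (σorg σnew σc : List (Set X) → Set Y) (h : List (Set Y × Set X))
    (hwin : WinningFor σorg φorg)
    (hhist : HistConsistent σorg h)
    (hnew : WinningAssuming σnew φorg h)
    (hc₁ : ∀ e : List (Set X), (h.map Prod.snd) <+: e → σc e = σnew (e.drop h.length))
    (hc₂ : ∀ e : List (Set X), ¬ (h.map Prod.snd) <+: e → σc e = σorg e) :
    WinningFor σc φorg := by
  intro π hπ
  by_cases hpre : ∃ i, h.map Prod.snd <+: (List.range i).map fun j => (π j).2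
  · obtain ⟨i, hi⟩ := hpre
    have henv : h.map Prod.snd = (List.range h.length).map fun j => (π j).2 := by
      simpa using eq_map_range_of_prefix hi
    have hh : h = (List.range h.length).map π := by
      refine hhist.eq_map_range henv fun j hj => ?_
      rw [hπ j]
      refine hc₂ _ fun hp => ?_
      have := hp.length_le
      simp only [List.length_map, List.length_range] at this
      omega
    have htrace : histTrace h = jointTrace π h.length := by
      conv_lhs => rw [hh]
      simp [histTrace, jointTrace]
    obtain ⟨k, hk⟩ := hnew (fun i => π (h.length + i)) fun i => by
      rw [hπ (h.length + i), map_range_add, ← henv, hc₁ _ (List.prefix_append _ _),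
        List.drop_left' (List.length_map _)]
    exact ⟨h.length + k, by rwa [jointTrace_add, ← htrace]⟩
  · exact hwin π fun i => by rw [hπ i, hc₂ _ fun hp => hpre ⟨i, hp⟩]
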